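/- Let c𝒜 be the cone of the affine arrangement 𝒜. Then for every k ≥ 0, dim_ℚ B(c𝒜)_k = dim_ℚ B(𝒜)_k + dim_ℚ B(𝒜)_{k−1}, where B(−)_k denotes the degree-k graded component (grading by total degree in the generators); equivalently Poin(B(c𝒜)) = (1 + t²)·Poin(B(𝒜)) when each generator is placed in degree 2. -/

import Mathlib

/-!
Write `B(𝒜)` for the algebra of an arrangement `𝒜`, here an arbitrary finite family of affine
functions. A direct check on the relations shows that multiplication by the generator `e₀` at
infinity induces a map `B(𝒜)[-1] → B(c𝒜)`, and that `e_H ↦ e_{cH}` induces a surjection of `B(𝒜)`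
onto its cokernel. The theorem says that both maps are injective, that is,
`dim B(c𝒜) ≥ 2 dim B(𝒜)`, and this follows by counting chambers. By deletion and restriction,
`dim B(𝒜)` is at most the number of chambers of `𝒜`. For a central arrangement it is also at least
that number: the indicator functions of the positive half-spaces generate the algebra of functions
on the chambers, and every defining relation of `B(𝒜)` is the leading form of a relation between
them (Varchenko and Gelfand). Since `c𝒜` is central and each chamber of `𝒜` gives two opposite
chambers of `c𝒜`, we get `2 dim B(𝒜) ≤ 2 #chambers(𝒜) ≤ #chambers(c𝒜) ≤ dim B(c𝒜)`.
-/

open MvPolynomial Set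

variable {V : Type*} [NormedAddCommGroup V] [NormedSpace ℝ V] [FiniteDimensional ℝ V]

/-- The hyperplane `H i`. -/
def Hyp {n : ℕ} (ω : Fin n → V →ᵃ[ℝ] ℝ) (i : Fin n) : Set V := {v | ω i v = 0}

/-- The open positive half-space `H i⁺`. -/
def Hplus {n : ℕ} (ω : Fin n → V →ᵃ[ℝ] ℝ) (i : Fin n) : Set V := {v | 0 < ω i v}

/-- The open negative half-space `H i⁻`. -/
def Hminus {n : ℕ} (ω : Fin n → V →ᵃ[ℝ] ℝ) (i : Fin n) : Set V := {v | ω i v < 0}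

/-- The defining linear forms of the cone `c𝒜` on `V ⊕ ℝ`: the extra hyperplane `cH₀`
has form `cω₀(v, r) = -r`, and `cHᵢ` has form `cωᵢ(v, r) = ω̄ᵢ(v) - r·aᵢ`
(where `Hᵢ = ω̄ᵢ⁻¹(aᵢ)`, i.e. `aᵢ = -ωᵢ(0)`). -/
noncomputable def coneForm {n : ℕ} (ω : Fin n → V →ᵃ[ℝ] ℝ) :
    Option (Fin n) → (V × ℝ) →ₗ[ℝ] ℝ
  | none => -LinearMap.snd ℝ V ℝ
  | some i => (ω i).linear.comp (LinearMap.fst ℝ V ℝ) + (ω i 0) • LinearMap.snd ℝ V ℝ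

/-- The hyperplane `cH j` of the cone. -/
noncomputable def cHyp {n : ℕ} (ω : Fin n → V →ᵃ[ℝ] ℝ) (j : Option (Fin n)) :
    Set (V × ℝ) := {p | coneForm ω j p = 0}

/-- The open positive half-space `cH j⁺` of the cone. -/
noncomputable def cHplus {n : ℕ} (ω : Fin n → V →ᵃ[ℝ] ℝ) (j : Option (Fin n)) :
    Set (V × ℝ) := {p | 0 < coneForm ω j p}

/-- The open negative half-space `cH j⁻` of the cone. -/
noncomputable def cHminus {n : ℕ} (ω : Fin n → V →ᵃ[ℝ] ℝ) (j : Option (Fin n)) :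
    Set (V × ℝ) := {p | coneForm ω j p < 0}

/-- Family (1) of the Cordovil ideal: `e i ^ 2`. -/
def bFam1 (ι : Type*) : Set (MvPolynomial ι ℚ) := {p | ∃ i : ι, p = X i ^ 2}

/-- Family (2): `∏_{i∈S} e i` whenever `⋂_{i∈S} Z i = ∅`. -/
def bFam2 {ι W : Type*} (Z : ι → Set W) : Set (MvPolynomial ι ℚ) :=
  {p | ∃ S : Finset ι, (⋂ i ∈ S, Z i) = ∅ ∧ p = ∏ i ∈ S, X i}

/-- Family (3): `Σ_{k∈S⁻} (∏_{i∈S⁺} e i · ∏_{j∈S⁻, j≠k} e j) -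
Σ_{k∈S⁺} (∏_{i∈S⁺, i≠k} e i · ∏_{j∈S⁻} e j)` for disjoint `S⁺, S⁻` with
`⋂_{i∈S⁺} Z⁺ i ∩ ⋂_{j∈S⁻} Z⁻ j = ∅` and `⋂_{i∈S⁺∪S⁻} Z i ≠ ∅`. -/
def bFam3 {ι W : Type*} [DecidableEq ι] (Z Zp Zm : ι → Set W) :
    Set (MvPolynomial ι ℚ) :=
  {p | ∃ Sp Sm : Finset ι, Disjoint Sp Sm ∧
    (⋂ i ∈ Sp, Zp i) ∩ (⋂ j ∈ Sm, Zm j) = ∅ ∧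
    (⋂ i ∈ (Sp ∪ Sm : Finset ι), Z i) ≠ ∅ ∧
    p = (∑ k ∈ Sm, ((∏ i ∈ Sp, X i) * ∏ j ∈ Sm.erase k, X j)) -
      ∑ k ∈ Sp, ((∏ i ∈ Sp.erase k, X i) * ∏ j ∈ Sm, X j)}

/-- The ideal `𝓘₀` defining the algebra `B(𝒜)`; the arrangement is recorded through its
hyperplanes `Z i` and open half-spaces `Zp i`, `Zm i`. -/
noncomputable def bIdeal {ι W : Type*} [DecidableEq ι] (Z Zp Zm : ι → Set W) :
    Ideal (MvPolynomial ι ℚ) :=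
  Ideal.span (bFam1 ι ∪ bFam2 Z ∪ bFam3 Z Zp Zm)

/-- The algebra `B(𝒜) = ℚ[e_H : H ∈ 𝒜] / 𝓘₀`. -/
abbrev BAlg {ι W : Type*} [DecidableEq ι] (Z Zp Zm : ι → Set W) :=
  MvPolynomial ι ℚ ⧸ bIdeal Z Zp Zm

/-- The degree-`k` graded component of `B(𝒜)` (grading by total degree in the
generators): the image of the homogeneous polynomials of degree `k`. -/
noncomputable def bGrade {ι W : Type*} [DecidableEq ι] (Z Zp Zm : ι → Set W) (k : ℕ) :
    Submodule ℚ (BAlg Z Zp Zm) :=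
  Submodule.map (Ideal.Quotient.mkₐ ℚ (bIdeal Z Zp Zm)).toLinearMap
    (MvPolynomial.homogeneousSubmodule ι ℚ k)

/-! ### Linear algebra -/

section LinearAlgebra

variable {K : Type*} [Field K]

section Exact

variable {M M' N : Type*} [AddCommGroup M] [Module K M] [AddCommGroup M'] [Module K M']
  [AddCommGroup N] [Module K N] [Module.Finite K M] [Module.Finite K M'] [Module.Finite K N]
  {f : M →ₗ[K] N} {g : M' →ₗ[K] N ⧸ LinearMap.range f}

theorem finrank_le_add_of_surjective (hg : Function.Surjective g) :
    Module.finrank K N ≤ Module.finrank K M + Module.finrank K M' := by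
  have hN := (LinearMap.range f).finrank_quotient_add_finrank
  have hf := LinearMap.finrank_range_le f
  have hg := LinearMap.finrank_le_finrank_of_surjective hg
  omega

theorem injective_of_finrank_add_le (hg : Function.Surjective g)
    (h : Module.finrank K M + Module.finrank K M' ≤ Module.finrank K N) :
    Function.Injective f ∧ Function.Injective g := by
  have hN := (LinearMap.range f).finrank_quotient_add_finrank
  have hf := LinearMap.finrank_range_le f
  have hg' := LinearMap.finrank_le_finrank_of_surjective hg
  have hkf := f.finrank_range_add_finrank_ker
  have hkg := g.finrank_range_add_finrank_ker
  rw [LinearMap.range_eq_top.2 hg, finrank_top] at hkg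
  constructor
  · exact LinearMap.ker_eq_bot.1 (Submodule.finrank_eq_zero.1 (by omega))
  · exact LinearMap.ker_eq_bot.1 (Submodule.finrank_eq_zero.1 (by omega))

end Exact

theorem finrank_map_mkQ_add_finrank_inf {N : Type*} [AddCommGroup N] [Module K N]
    (W P : Submodule K N) [Module.Finite K W] :
    Module.finrank K (W.map P.mkQ) + Module.finrank K (W ⊓ P : Submodule K N) =
      Module.finrank K W := by
  rw [← (P.mkQ.domRestrict W).finrank_range_add_finrank_ker, LinearMap.range_domRestrict,
    LinearMap.ker_domRestrict, Submodule.ker_mkQ, ← Submodule.map_comap_subtype,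
    (Submodule.equivMapOfInjective _ W.subtype_injective _).finrank_eq]

section QuotientLift

variable {A M : Type*} [CommRing A] [Algebra K A] [AddCommGroup M] [Module K M]

/-- The map `A ⧸ I → M` induced by a `K`-linear map vanishing on an ideal `I` of a
`K`-algebra `A`. -/
noncomputable def quotientLift (I : Ideal A) (f : A →ₗ[K] M) (h : ∀ a ∈ I, f a = 0) :
    A ⧸ I →ₗ[K] M :=
  (I.restrictScalars K).liftQ f h ∘ₗ (Submodule.Quotient.restrictScalarsEquiv K I).symm

end QuotientLift

end LinearAlgebra

/-! ### Homogeneous components -/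

attribute [local instance] MvPolynomial.gradedAlgebra

theorem homogeneousComponent_mul_of_isHomogeneous {σ R : Type*} [CommSemiring R]
    {p : MvPolynomial σ R} {m : ℕ} (hp : p.IsHomogeneous m) (q : MvPolynomial σ R) (n : ℕ) :
    homogeneousComponent n (p * q) =
      if m ≤ n then p * homogeneousComponent (n - m) q else 0 := by
  simp only [← decomposition.decompose'_apply]
  exact DirectSum.coe_decompose_mul_of_left_mem (homogeneousSubmodule σ R) n hp

theorem isHomogeneous_prod_X {ι : Type*} (S : Finset ι) :
    (∏ i ∈ S, X i : MvPolynomial ι ℚ).IsHomogeneous S.card := by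
  simpa using IsHomogeneous.prod S _ (fun _ ↦ 1) fun i _ ↦ isHomogeneous_X ℚ i

/-! ### The generators of the ideal -/

section CircuitRelation

variable {ι κ : Type*} [DecidableEq ι] [DecidableEq κ]

/-- The sum `∑ k ∈ S, ∏ j ∈ S \ {k}, e j`: the derivation sending every generator to `1`,
applied to the squarefree monomial with support `S`. -/
noncomputable def boundary (S : Finset ι) : MvPolynomial ι ℚ := ∑ k ∈ S, ∏ j ∈ S.erase k, X j

/-- The relation of family (3) attached to a pair `(S⁺, S⁻)`, in factored form. -/
noncomputable def circuitRel (Sp Sm : Finset ι) : MvPolynomial ι ℚ :=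
  (∏ i ∈ Sp, X i) * boundary Sm - boundary Sp * ∏ i ∈ Sm, X i

theorem circuitRel_eq_sum_sub_sum (Sp Sm : Finset ι) :
    circuitRel Sp Sm = (∑ k ∈ Sm, ((∏ i ∈ Sp, X i) * ∏ j ∈ Sm.erase k, X j)) -
      ∑ k ∈ Sp, ((∏ i ∈ Sp.erase k, X i) * ∏ j ∈ Sm, X j) := by
  rw [circuitRel, boundary, boundary, Finset.mul_sum, Finset.sum_mul]

theorem boundary_insert {a : ι} {S : Finset ι} (ha : a ∉ S) :
    boundary (insert a S) = ∏ i ∈ S, X i + X a * boundary S := by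
  rw [boundary, Finset.sum_insert ha, Finset.erase_insert ha, boundary, Finset.mul_sum]
  congr 1
  refine Finset.sum_congr rfl fun k hk ↦ ?_
  rw [Finset.erase_insert_of_ne (ne_of_mem_of_not_mem hk ha).symm, Finset.prod_insert]
  exact fun h ↦ ha (Finset.mem_of_mem_erase h)

theorem circuitRel_insert_left {a : ι} {Sp : Finset ι} (ha : a ∉ Sp) (Sm : Finset ι) :
    circuitRel (insert a Sp) Sm =
      X a * circuitRel Sp Sm - (∏ i ∈ Sp, X i) * ∏ i ∈ Sm, X i := by
  rw [circuitRel, circuitRel, Finset.prod_insert ha, boundary_insert ha]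
  ring

theorem circuitRel_insert_right {a : ι} (Sp : Finset ι) {Sm : Finset ι} (ha : a ∉ Sm) :
    circuitRel Sp (insert a Sm) =
      X a * circuitRel Sp Sm + (∏ i ∈ Sp, X i) * ∏ i ∈ Sm, X i := by
  rw [circuitRel, circuitRel, Finset.prod_insert ha, boundary_insert ha]
  ring

theorem rename_boundary (s : κ ↪ ι) (S : Finset κ) :
    rename s (boundary S) = boundary (S.map s) := by
  simp only [boundary, map_sum, map_prod, rename_X, Finset.sum_map, ← Finset.map_erase,
    Finset.prod_map]

theorem rename_circuitRel (s : κ ↪ ι) (Sp Sm : Finset κ) :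
    rename s (circuitRel Sp Sm) = circuitRel (Sp.map s) (Sm.map s) := by
  simp only [circuitRel, map_sub, map_mul, map_prod, rename_X, rename_boundary, Finset.prod_map]

theorem rename_some_circuitRel (Sp Sm : Finset ι) :
    rename some (circuitRel Sp Sm) = circuitRel (Sp.map .some) (Sm.map .some) :=
  rename_circuitRel .some Sp Sm

theorem isHomogeneous_boundary (S : Finset ι) : (boundary S).IsHomogeneous (S.card - 1) := by
  refine IsHomogeneous.sum _ _ _ fun k hk ↦ ?_
  rw [← Finset.card_erase_of_mem hk]
  exact isHomogeneous_prod_X _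

theorem isHomogeneous_circuitRel (Sp Sm : Finset ι) :
    (circuitRel Sp Sm).IsHomogeneous (Sp.card + Sm.card - 1) := by
  refine IsHomogeneous.sub ?_ ?_
  · rcases Sm.eq_empty_or_nonempty with rfl | h
    · simp [boundary, isHomogeneous_zero]
    · rw [Nat.add_sub_assoc h.card_pos]
      exact (isHomogeneous_prod_X Sp).mul (isHomogeneous_boundary Sm)
  · rcases Sp.eq_empty_or_nonempty with rfl | h
    · simp [boundary, isHomogeneous_zero]
    · rw [Nat.sub_add_comm h.card_pos]
      exact (isHomogeneous_boundary Sp).mul (isHomogeneous_prod_X Sm)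

end CircuitRelation

/-! ### The ideal of a family of affine functions -/

section Arrangement

variable {𝕜 E ι : Type*} [Field 𝕜] [AddCommGroup E] [Module 𝕜 E]

/-- The hyperplanes of the arrangement given by a family of affine functions. The functions may
be constant, so that arrangements are stable under restriction to a hyperplane. -/
def zeroSet (ω : ι → E →ᵃ[𝕜] 𝕜) (i : ι) : Set E := {v | ω i v = 0}

/-- The intersection of the hyperplanes indexed by `S`; it may be empty. -/
def flat (ω : ι → E →ᵃ[𝕜] 𝕜) (S : Finset ι) : Set E := {v | ∀ i ∈ S, ω i v = 0}

theorem iInter_zeroSet (ω : ι → E →ᵃ[𝕜] 𝕜) (S : Finset ι) :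
    ⋂ i ∈ S, zeroSet ω i = flat ω S := by
  ext v
  simp [zeroSet, flat]

variable [LinearOrder 𝕜]

/-- The positive open half-spaces of an arrangement. -/
def posSet (ω : ι → E →ᵃ[𝕜] 𝕜) (i : ι) : Set E := {v | 0 < ω i v}

/-- The negative open half-spaces of an arrangement. -/
def negSet (ω : ι → E →ᵃ[𝕜] 𝕜) (i : ι) : Set E := {v | ω i v < 0}

/-- The open polyhedron cut out by the positive half-spaces indexed by `Sp` and the negative
half-spaces indexed by `Sm`; it may be empty. -/
def cell (ω : ι → E →ᵃ[𝕜] 𝕜) (Sp Sm : Finset ι) : Set E :=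
  {v | (∀ i ∈ Sp, 0 < ω i v) ∧ ∀ i ∈ Sm, ω i v < 0}

/-- The ideal `𝓘₀` of the arrangement given by a family of affine functions. -/
noncomputable def cordovilIdeal [DecidableEq ι] (ω : ι → E →ᵃ[𝕜] 𝕜) :
    Ideal (MvPolynomial ι ℚ) :=
  bIdeal (zeroSet ω) (posSet ω) (negSet ω)

theorem iInter_posSet_inter_iInter_negSet (ω : ι → E →ᵃ[𝕜] 𝕜) (Sp Sm : Finset ι) :
    (⋂ i ∈ Sp, posSet ω i) ∩ ⋂ i ∈ Sm, negSet ω i = cell ω Sp Sm := by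
  ext v
  simp [posSet, negSet, cell]

section Generators

variable [DecidableEq ι] {ω : ι → E →ᵃ[𝕜] 𝕜}

theorem X_sq_mem_cordovilIdeal (i : ι) : X i ^ 2 ∈ cordovilIdeal ω :=
  Ideal.subset_span (Or.inl (Or.inl ⟨i, rfl⟩))

theorem prod_X_mem_cordovilIdeal {S : Finset ι} (hS : flat ω S = ∅) :
    ∏ i ∈ S, X i ∈ cordovilIdeal ω :=
  Ideal.subset_span (Or.inl (Or.inr ⟨S, (iInter_zeroSet ω S).trans hS, rfl⟩))

theorem circuitRel_mem_cordovilIdeal {Sp Sm : Finset ι} (hd : Disjoint Sp Sm)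
    (hcell : cell ω Sp Sm = ∅) (hflat : (flat ω (Sp ∪ Sm)).Nonempty) :
    circuitRel Sp Sm ∈ cordovilIdeal ω := by
  refine Ideal.subset_span (Or.inr ⟨Sp, Sm, hd, ?_, ?_, circuitRel_eq_sum_sub_sum Sp Sm⟩)
  · rw [iInter_posSet_inter_iInter_negSet, hcell]
  · rw [iInter_zeroSet]
    exact hflat.ne_empty

theorem cordovilIdeal_eq_span :
    cordovilIdeal ω = Ideal.span {p | (∃ i, p = X i ^ 2) ∨
      (∃ S, flat ω S = ∅ ∧ p = ∏ i ∈ S, X i) ∨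
      ∃ Sp Sm, Disjoint Sp Sm ∧ cell ω Sp Sm = ∅ ∧ (flat ω (Sp ∪ Sm)).Nonempty ∧
        p = circuitRel Sp Sm} := by
  simp only [cordovilIdeal, bIdeal, bFam1, bFam2, bFam3, iInter_zeroSet,
    iInter_posSet_inter_iInter_negSet, ← circuitRel_eq_sum_sub_sum, ← nonempty_iff_ne_empty,
    union_assoc]
  rfl

@[elab_as_elim]
theorem cordovilIdeal_induction {P : MvPolynomial ι ℚ → Prop} (sq : ∀ i, P (X i ^ 2))
    (prod : ∀ S, flat ω S = ∅ → P (∏ i ∈ S, X i))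
    (circuit : ∀ Sp Sm, Disjoint Sp Sm → cell ω Sp Sm = ∅ → (flat ω (Sp ∪ Sm)).Nonempty →
      P (circuitRel Sp Sm))
    (zero : P 0) (add : ∀ p q, P p → P q → P (p + q)) (mul : ∀ a p, P p → P (a * p))
    {p : MvPolynomial ι ℚ} (hp : p ∈ cordovilIdeal ω) : P p := by
  rw [cordovilIdeal_eq_span] at hp
  induction hp using Submodule.span_induction with
  | mem p hp =>
    rcases hp with ⟨i, rfl⟩ | ⟨S, hS, rfl⟩ | ⟨Sp, Sm, hd, hcell, hflat, rfl⟩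
    · exact sq i
    · exact prod S hS
    · exact circuit Sp Sm hd hcell hflat
  | zero => exact zero
  | add p q _ _ hp hq => exact add p q hp hq
  | smul a p _ hp => exact mul a p hp

theorem cordovilIdeal_le {J : Ideal (MvPolynomial ι ℚ)} (sq : ∀ i, X i ^ 2 ∈ J)
    (prod : ∀ S, flat ω S = ∅ → ∏ i ∈ S, X i ∈ J)
    (circuit : ∀ Sp Sm, Disjoint Sp Sm → cell ω Sp Sm = ∅ → (flat ω (Sp ∪ Sm)).Nonempty →
      circuitRel Sp Sm ∈ J) :
    cordovilIdeal ω ≤ J := fun _ hp ↦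
  cordovilIdeal_induction sq prod circuit J.zero_mem (fun _ _ ↦ J.add_mem)
    (fun a _ ↦ J.mul_mem_left a) hp

theorem isHomogeneous_cordovilIdeal (ω : ι → E →ᵃ[𝕜] 𝕜) :
    (cordovilIdeal ω).IsHomogeneous (homogeneousSubmodule ι ℚ) := by
  rw [cordovilIdeal_eq_span]
  refine Ideal.homogeneous_span _ _ ?_
  rintro _ (⟨i, rfl⟩ | ⟨S, -, rfl⟩ | ⟨Sp, Sm, -, -, -, rfl⟩)
  · exact ⟨2, isHomogeneous_X_pow i 2⟩
  · exact ⟨_, isHomogeneous_prod_X S⟩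
  · exact ⟨_, isHomogeneous_circuitRel Sp Sm⟩

theorem cordovilIdeal_comp_le_comap_rename {κ : Type*} [DecidableEq κ] (ω : ι → E →ᵃ[𝕜] 𝕜)
    (s : κ ↪ ι) :
    cordovilIdeal (fun k ↦ ω (s k)) ≤ (cordovilIdeal ω).comap (rename s) := by
  refine cordovilIdeal_le (fun k ↦ ?_) (fun S hS ↦ ?_) fun Sp Sm hd hcell hflat ↦ ?_
  · simpa using X_sq_mem_cordovilIdeal (s k)
  · have hS' : flat ω (S.map s) = ∅ := by simpa [flat] using hS
    simpa [Finset.prod_map] using prod_X_mem_cordovilIdeal hS'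
  · have hcell' : cell ω (Sp.map s) (Sm.map s) = ∅ := by simpa [cell] using hcell
    rw [Ideal.mem_comap, rename_circuitRel]
    refine circuitRel_mem_cordovilIdeal ((Finset.disjoint_map s).2 hd) hcell' ?_
    simpa [← Finset.map_union, flat] using hflat

theorem finite_quotient_cordovilIdeal [Finite ι] (ω : ι → E →ᵃ[𝕜] 𝕜) :
    Module.Finite ℚ (MvPolynomial ι ℚ ⧸ cordovilIdeal ω) := by
  have hX (i : ι) : IsIntegral ℚ (Ideal.Quotient.mk (cordovilIdeal ω) (X i)) := by
    refine IsIntegral.of_pow two_pos ?_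
    rw [← map_pow, Ideal.Quotient.eq_zero_iff_mem.2 (X_sq_mem_cordovilIdeal i)]
    exact isIntegral_zero
  have : Algebra.IsIntegral ℚ (MvPolynomial ι ℚ ⧸ cordovilIdeal ω) := by
    refine ⟨fun x ↦ ?_⟩
    obtain ⟨p, rfl⟩ := Ideal.Quotient.mk_surjective x
    induction p using MvPolynomial.induction_on with
    | C a => exact isIntegral_algebraMap
    | add p q hp hq => simpa using hp.add hq
    | mul_X p i hp => simpa using hp.mul (hX i)
  exact Algebra.IsIntegral.finite

end Generators

end Arrangement

section Convex

variable {𝕜 E ι : Type*} [Field 𝕜] [LinearOrder 𝕜] [IsStrictOrderedRing 𝕜]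
  [AddCommGroup E] [Module 𝕜 E]

theorem convex_cell (ω : ι → E →ᵃ[𝕜] 𝕜) (Sp Sm : Finset ι) : Convex 𝕜 (cell ω Sp Sm) := by
  have h : cell ω Sp Sm = (⋂ i ∈ Sp, ω i ⁻¹' Ioi 0) ∩ ⋂ i ∈ Sm, ω i ⁻¹' Iio 0 := by
    ext v
    simp [cell]
  rw [h]
  exact (convex_iInter₂ fun i _ ↦ (convex_Ioi 0).affine_preimage (ω i)).inter
    (convex_iInter₂ fun i _ ↦ (convex_Iio 0).affine_preimage (ω i))

theorem forall_pos_or_forall_neg_of_convex {s : Set E} (hs : Convex 𝕜 s) {h : E →ᵃ[𝕜] 𝕜}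
    (h0 : ∀ v ∈ s, h v ≠ 0) : (∀ v ∈ s, 0 < h v) ∨ ∀ v ∈ s, h v < 0 := by
  by_contra! ⟨⟨v, hv, hv0⟩, w, hw, hw0⟩
  obtain ⟨u, hu, hu0⟩ := (hs.affine_image h).ordConnected.out (mem_image_of_mem h hv)
    (mem_image_of_mem h hw) ⟨hv0, hw0⟩
  exact h0 u hu hu0

end Convex

/-! ### Adding one hyperplane to an arrangement -/

section AddHyperplane

theorem exists_eq_rename_add_X_none_mul {ι R : Type*} [CommSemiring R]
    (r : MvPolynomial (Option ι) R) :
    ∃ (a : MvPolynomial ι R) (r' : MvPolynomial (Option ι) R),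
      r = rename some a + X none * r' := by
  induction r using MvPolynomial.induction_on with
  | C c => exact ⟨C c, 0, by simp⟩
  | add p q hp hq =>
    obtain ⟨a, p', rfl⟩ := hp
    obtain ⟨b, q', rfl⟩ := hq
    exact ⟨a + b, p' + q', by rw [map_add]; ring⟩
  | mul_X p i hp =>
    obtain ⟨a, p', rfl⟩ := hp
    cases i with
    | none => exact ⟨0, rename some a + X none * p', by rw [map_zero]; ring⟩
    | some j => exact ⟨a * X j, p' * X (some j), by rw [map_mul, rename_X]; ring⟩

theorem exists_isHomogeneous_eq_rename_add_X_none_mul {ι R : Type*} [CommSemiring R]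
    {r : MvPolynomial (Option ι) R} {k : ℕ} (hr : r.IsHomogeneous k) :
    ∃ a p, a.IsHomogeneous k ∧ r = rename some a + X none * p := by
  obtain ⟨a, p, hap⟩ := exists_eq_rename_add_X_none_mul r
  have hk := homogeneousComponent_of_mem (n := k) (m := k) hr
  rw [if_pos rfl, hap, map_add, homogeneousComponent_mul_of_isHomogeneous (isHomogeneous_X R none),
    ← rename_homogeneousComponent] at hk
  refine ⟨_, if 1 ≤ k then homogeneousComponent (k - 1) p else 0,
    homogeneousComponent_isHomogeneous k a, ?_⟩
  rw [hap, ← hk, mul_ite, mul_zero]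

variable {𝕜 E ι : Type*} [Field 𝕜] [LinearOrder 𝕜] [AddCommGroup E] [Module 𝕜 E]
  [DecidableEq ι]

theorem exists_sub_mem_cordovilIdeal (ω : Option ι → E →ᵃ[𝕜] 𝕜)
    (r : MvPolynomial (Option ι) ℚ) :
    ∃ a b : MvPolynomial ι ℚ,
      r - (rename some a + X none * rename some b) ∈ cordovilIdeal ω := by
  obtain ⟨a, r, rfl⟩ := exists_eq_rename_add_X_none_mul r
  obtain ⟨b, r, rfl⟩ := exists_eq_rename_add_X_none_mul r
  refine ⟨a, b, ?_⟩
  have h := (cordovilIdeal ω).mul_mem_left r (X_sq_mem_cordovilIdeal none)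
  ring_nf at h ⊢
  exact h

theorem rename_some_mem_cordovilIdeal {ω : Option ι → E →ᵃ[𝕜] 𝕜} {p : MvPolynomial ι ℚ}
    (hp : p ∈ cordovilIdeal fun i ↦ ω (some i)) : rename some p ∈ cordovilIdeal ω :=
  cordovilIdeal_comp_le_comap_rename ω .some hp

theorem X_none_mul_rename_prod_X_mem {ω : Option ι → E →ᵃ[𝕜] 𝕜} {S : Finset ι}
    (hS : ∀ v ∈ flat (fun i ↦ ω (some i)) S, ω none v ≠ 0) :
    X none * rename some (∏ i ∈ S, X i) ∈ cordovilIdeal ω := by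
  have hflat : flat ω (insert none (S.map .some)) = ∅ := by
    refine eq_empty_of_forall_notMem fun v hv ↦ hS v (fun i hi ↦ ?_) ?_
    · exact hv (some i) (by simpa using hi)
    · exact hv none (Finset.mem_insert_self _ _)
  simpa [Finset.prod_insert, Finset.prod_map] using prod_X_mem_cordovilIdeal hflat

variable [IsStrictOrderedRing 𝕜]

/-- The convexity of cells is what makes restriction work: a cell disjoint from the hyperplane
`none` lies on one side of it, so that `none` can be added to one half of the circuit. -/
theorem exists_X_none_mul_rename_circuitRel_sub_rename_mem {ω : Option ι → E →ᵃ[𝕜] 𝕜}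
    {Sp Sm : Finset ι} (hd : Disjoint Sp Sm)
    (hcell : ∀ v ∈ cell (fun i ↦ ω (some i)) Sp Sm, ω none v ≠ 0)
    (hflat : ∃ v ∈ flat (fun i ↦ ω (some i)) (Sp ∪ Sm), ω none v = 0) :
    ∃ q : MvPolynomial ι ℚ,
      X none * rename some (circuitRel Sp Sm) - rename some q ∈ cordovilIdeal ω := by
  have hnone (S : Finset ι) : none ∉ S.map .some := by simp
  obtain ⟨x, hx, hx0⟩ := hflat
  have hx' : ∀ i, (i ∈ Sp ∨ i ∈ Sm) → ω (some i) x = 0 := by simpa [flat] using hx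
  have hd' : Disjoint (Sp.map .some) (Sm.map .some) := (Finset.disjoint_map _).2 hd
  rcases forall_pos_or_forall_neg_of_convex (convex_cell _ _ _) hcell with hpos | hneg
  · refine ⟨-((∏ i ∈ Sp, X i) * ∏ i ∈ Sm, X i), ?_⟩
    have hrel : circuitRel (Sp.map .some) (insert none (Sm.map .some)) ∈ cordovilIdeal ω := by
      refine circuitRel_mem_cordovilIdeal (by simpa using hd') ?_ ⟨x, ?_⟩
      · refine eq_empty_of_forall_notMem fun v hv ↦ ?_
        simp only [cell, mem_ofPred_eq, Finset.forall_mem_insert, Finset.forall_mem_map] at hv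
        exact hv.2.1.not_gt (hpos v ⟨hv.1, hv.2.2⟩)
      · simpa [flat, hx0, ← Finset.map_union] using hx'
    rw [circuitRel_insert_right _ (hnone Sm)] at hrel
    simpa [rename_some_circuitRel, Finset.prod_map] using hrel
  · refine ⟨(∏ i ∈ Sp, X i) * ∏ i ∈ Sm, X i, ?_⟩
    have hrel : circuitRel (insert none (Sp.map .some)) (Sm.map .some) ∈ cordovilIdeal ω := by
      refine circuitRel_mem_cordovilIdeal (by simpa using hd') ?_ ⟨x, ?_⟩
      · refine eq_empty_of_forall_notMem fun v hv ↦ ?_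
        simp only [cell, mem_ofPred_eq, Finset.forall_mem_insert, Finset.forall_mem_map] at hv
        exact hv.1.1.not_gt (hneg v ⟨hv.1.2, hv.2⟩)
      · simpa [flat, hx0, ← Finset.map_union] using hx'
    rw [circuitRel_insert_left (hnone Sp)] at hrel
    simpa [rename_some_circuitRel, Finset.prod_map] using hrel

theorem exists_X_none_mul_rename_sub_rename_mem {F : Type*} [AddCommGroup F] [Module 𝕜 F]
    {ω : Option ι → E →ᵃ[𝕜] 𝕜} {g : F →ᵃ[𝕜] E} (hg : range g = zeroSet ω none)
    {p : MvPolynomial ι ℚ} (hp : p ∈ cordovilIdeal fun i ↦ (ω (some i)).comp g) :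
    ∃ q : MvPolynomial ι ℚ, X none * rename some p - rename some q ∈ cordovilIdeal ω := by
  have hne {s : Set E} (hs : g ⁻¹' s = ∅) : ∀ v ∈ s, ω none v ≠ 0 := by
    intro v hv h0
    obtain ⟨x, rfl⟩ := hg.superset h0
    exact hs.subset hv
  refine cordovilIdeal_induction (fun i ↦ ⟨0, ?_⟩) (fun S hS ↦ ⟨0, ?_⟩)
    (fun Sp Sm hd hcell ⟨x, hx⟩ ↦ ?_) ⟨0, by simp⟩ ?_ ?_ hp
  · simpa using (cordovilIdeal ω).mul_mem_left (X none) (X_sq_mem_cordovilIdeal (some i))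
  · simpa using X_none_mul_rename_prod_X_mem (hne hS)
  · exact exists_X_none_mul_rename_circuitRel_sub_rename_mem hd (hne hcell)
      ⟨g x, hx, hg.subset (mem_range_self x)⟩
  · rintro p q ⟨p', hp'⟩ ⟨q', hq'⟩
    refine ⟨p' + q', ?_⟩
    convert add_mem hp' hq' using 1
    rw [map_add, map_add]
    ring
  · rintro a p ⟨p', hp'⟩
    refine ⟨a * p', ?_⟩
    convert (cordovilIdeal ω).mul_mem_left (rename some a) hp' using 1
    rw [map_mul, map_mul]
    ring

end AddHyperplane

/-! ### Deletion and restriction -/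

section DeletionRestriction

variable {𝕜 E F ι : Type*} [Field 𝕜] [AddCommGroup E] [Module 𝕜 E] [AddCommGroup F] [Module 𝕜 F]

theorem exists_range_eq_zeroSet {h : E →ᵃ[𝕜] 𝕜} (hh : h.linear ≠ 0) :
    ∃ g : E →ᵃ[𝕜] E, range g = {v | h v = 0} := by
  obtain ⟨u, hu⟩ := LinearMap.surjective hh 1
  let g : E →ᵃ[𝕜] E := AffineMap.id 𝕜 E - (LinearMap.toSpanSingleton 𝕜 E u).toAffineMap.comp h
  have hg (v : E) : g v = v - h v • u := rfl
  refine ⟨g, Subset.antisymm ?_ fun v (hv : h v = 0) ↦ ⟨v, by simp [hg, hv]⟩⟩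
  rintro _ ⟨v, rfl⟩
  have := h.map_vadd v (-(h v • u))
  rw [map_neg, map_smul, hu, smul_eq_mul, mul_one, vadd_eq_add, vadd_eq_add, neg_add_cancel,
    neg_add_eq_sub] at this
  exact this

variable [LinearOrder 𝕜] [IsStrictOrderedRing 𝕜]

theorem finrank_quotient_cordovilIdeal_le_add [Finite ι] [DecidableEq ι]
    {ω : Option ι → E →ᵃ[𝕜] 𝕜} {g : F →ᵃ[𝕜] E} (hg : range g = zeroSet ω none) :
    Module.finrank ℚ (MvPolynomial (Option ι) ℚ ⧸ cordovilIdeal ω) ≤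
      Module.finrank ℚ (MvPolynomial ι ℚ ⧸ cordovilIdeal fun i ↦ ω (some i)) +
        Module.finrank ℚ
          (MvPolynomial ι ℚ ⧸ cordovilIdeal fun i ↦ (ω (some i)).comp g) := by
  have := finite_quotient_cordovilIdeal ω
  have := finite_quotient_cordovilIdeal fun i ↦ ω (some i)
  have := finite_quotient_cordovilIdeal fun i ↦ (ω (some i)).comp g
  let proj := (Ideal.Quotient.mkₐ ℚ (cordovilIdeal ω)).toLinearMap
  let ren : MvPolynomial ι ℚ →ₗ[ℚ] MvPolynomial (Option ι) ℚ := (rename some).toLinearMap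
  let incl := quotientLift (cordovilIdeal fun i ↦ ω (some i)) (proj ∘ₗ ren) fun p hp ↦
    Ideal.Quotient.eq_zero_iff_mem.2 (rename_some_mem_cordovilIdeal hp)
  let mulNone := quotientLift (cordovilIdeal fun i ↦ (ω (some i)).comp g)
    ((LinearMap.range incl).mkQ ∘ₗ proj ∘ₗ LinearMap.mulLeft ℚ (X none) ∘ₗ ren) fun p hp ↦ by
      obtain ⟨q, hq⟩ := exists_X_none_mul_rename_sub_rename_mem hg hp
      refine (Submodule.Quotient.mk_eq_zero _).2 ⟨Ideal.Quotient.mk _ q, ?_⟩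
      exact (Ideal.Quotient.eq.2 hq).symm
  refine finrank_le_add_of_surjective (f := incl) (g := mulNone) fun y ↦ ?_
  obtain ⟨x, rfl⟩ := Submodule.mkQ_surjective _ y
  obtain ⟨r, rfl⟩ := Ideal.Quotient.mk_surjective x
  obtain ⟨a, b, hab⟩ := exists_sub_mem_cordovilIdeal ω r
  have hr : proj r = incl (Ideal.Quotient.mk _ a) + proj (X none * rename some b) :=
    Ideal.Quotient.eq.2 hab
  refine ⟨Ideal.Quotient.mk _ b, Eq.symm ?_⟩
  calc (LinearMap.range incl).mkQ (proj r)
      = (LinearMap.range incl).mkQ (proj (X none * rename some b)) := by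
        rw [hr, map_add, Submodule.mkQ_apply _ (incl _),
          (Submodule.Quotient.mk_eq_zero _).2 (LinearMap.mem_range_self _ _), zero_add]
    _ = mulNone (Ideal.Quotient.mk _ b) := rfl

end DeletionRestriction

/-! ### Chambers -/

section Chambers

variable {𝕜 E ι : Type*} [Field 𝕜] [LinearOrder 𝕜] [AddCommGroup E] [Module 𝕜 E]

/-- The signs at `v` of the functions of an arrangement. -/
def signVector (ω : ι → E →ᵃ[𝕜] 𝕜) (v : E) (i : ι) : SignType := SignType.sign (ω i v)

/-- The chambers of an arrangement, encoded by the sign vectors of their points. -/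
def chambers (ω : ι → E →ᵃ[𝕜] 𝕜) : Set (ι → SignType) :=
  signVector ω '' {v | ∀ i, ω i v ≠ 0}

/-- The sign vectors, with respect to the hyperplanes `some i`, of the chambers on which the
function `ω none` has sign `s`. -/
def chambersOnSide (ω : Option ι → E →ᵃ[𝕜] 𝕜) (s : SignType) : Set (ι → SignType) :=
  {τ | (fun j ↦ j.elim s τ) ∈ chambers ω}

theorem signVector_mem_chambersOnSide {ω : Option ι → E →ᵃ[𝕜] 𝕜} {v : E} {s : SignType}
    (hs : s ≠ 0) (hv : ∀ i, ω (some i) v ≠ 0) (hvs : SignType.sign (ω none v) = s) :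
    signVector (fun i ↦ ω (some i)) v ∈ chambersOnSide ω s := by
  refine ⟨v, ?_, funext ?_⟩
  · rintro (_ | i)
    · rwa [← sign_ne_zero, hvs]
    · exact hv i
  · rintro (_ | i)
    · exact hvs
    · rfl

theorem ncard_chambersOnSide_add_le [Finite ι] (ω : Option ι → E →ᵃ[𝕜] 𝕜) {s t : SignType}
    (hst : s ≠ t) :
    (chambersOnSide ω s).ncard + (chambersOnSide ω t).ncard ≤ (chambers ω).ncard := by
  let extend (s : SignType) (τ : ι → SignType) (j : Option ι) : SignType := j.elim s τ
  have hinj (s : SignType) : Function.Injective (extend s) :=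
    fun τ τ' h ↦ funext fun i ↦ congrFun h (some i)
  have hdisj : Disjoint (extend s '' chambersOnSide ω s) (extend t '' chambersOnSide ω t) := by
    rw [Set.disjoint_left]
    rintro _ ⟨τ, -, rfl⟩ ⟨τ', -, h⟩
    exact hst (congrFun h none).symm
  rw [← ncard_image_of_injective _ (hinj s), ← ncard_image_of_injective _ (hinj t),
    ← ncard_union_eq hdisj]
  refine ncard_le_ncard (union_subset ?_ ?_)
  · exact image_subset_iff.2 fun _ h ↦ h
  · exact image_subset_iff.2 fun _ h ↦ h

variable [IsStrictOrderedRing 𝕜]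

theorem exists_pos_forall_sign_add_mul [Finite ι] {a : ι → 𝕜} (ha : ∀ i, a i ≠ 0) (b : ι → 𝕜) :
    ∃ t > 0, ∀ i, SignType.sign (a i + t * b i) = SignType.sign (a i) := by
  let := Preorder.topology 𝕜
  have : OrderTopology 𝕜 := ⟨rfl⟩
  have hcont (i : ι) : ∀ᶠ t in nhdsWithin (0 : 𝕜) (Ioi 0),
      SignType.sign (a i + t * b i) = SignType.sign (a i) := by
    have hsign : ContinuousAt SignType.sign (a i + 0 * b i) :=
      continuousAt_sign_of_ne_zero (by simpa using ha i)
    have h : ContinuousAt (fun t ↦ SignType.sign (a i + t * b i)) 0 :=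
      hsign.comp (f := fun t ↦ a i + t * b i) (by fun_prop)
    rw [ContinuousAt, nhds_discrete SignType, Filter.tendsto_pure, zero_mul, add_zero] at h
    exact nhdsWithin_le_nhds h
  obtain ⟨t, ht, h0⟩ := ((Filter.eventually_all.2 hcont).and self_mem_nhdsWithin).exists
  exact ⟨t, h0, ht⟩

theorem exists_signVector_eq_and_sign_eq [Finite ι] (ω : ι → E →ᵃ[𝕜] 𝕜) {h : E →ᵃ[𝕜] 𝕜}
    (hh : h.linear ≠ 0) {v : E} (hv : ∀ i, ω i v ≠ 0) (hv0 : h v = 0) (s : SignType) :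
    ∃ w, signVector ω w = signVector ω v ∧ SignType.sign (h w) = s := by
  obtain ⟨u, hu⟩ := LinearMap.surjective hh (s : 𝕜)
  obtain ⟨t, ht, hsign⟩ := exists_pos_forall_sign_add_mul hv fun i ↦ (ω i).linear u
  have hline (f : E →ᵃ[𝕜] 𝕜) : f (t • u + v) = f v + t * f.linear u := by
    simpa [add_comm] using f.map_vadd v (t • u)
  refine ⟨t • u + v, funext fun i ↦ ?_, ?_⟩
  · rw [signVector, hline, hsign, signVector]
  · rw [hline, hv0, hu, zero_add, sign_mul, sign_pos ht, one_mul]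
    cases s <;> simp

theorem ncard_chambers_deletion_add_restriction_le [Finite ι] {F : Type*} [AddCommGroup F]
    [Module 𝕜 F] {ω : Option ι → E →ᵃ[𝕜] 𝕜} (hω : (ω none).linear ≠ 0) {g : F →ᵃ[𝕜] E}
    (hg : range g ⊆ zeroSet ω none) :
    (chambers fun i ↦ ω (some i)).ncard + (chambers fun i ↦ (ω (some i)).comp g).ncard ≤
      (chambers ω).ncard := by
  have hside {v : E} (hv : ∀ i, ω (some i) v ≠ 0) (hv0 : ω none v = 0) {s : SignType}
      (hs : s ≠ 0) : signVector (fun i ↦ ω (some i)) v ∈ chambersOnSide ω s := by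
    obtain ⟨w, hw, hws⟩ := exists_signVector_eq_and_sign_eq (fun i ↦ ω (some i)) hω hv hv0 s
    rw [← hw]
    refine signVector_mem_chambersOnSide hs (fun i ↦ ?_) hws
    rw [← sign_ne_zero]
    exact (congrFun hw i).trans_ne (sign_ne_zero.2 (hv i))
  have hdel : (chambers fun i ↦ ω (some i)) ⊆ chambersOnSide ω 1 ∪ chambersOnSide ω (-1) := by
    rintro _ ⟨v, hv, rfl⟩
    rcases lt_trichotomy (ω none v) 0 with h | h | h
    · exact Or.inr (signVector_mem_chambersOnSide (by decide) hv (sign_neg h))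
    · exact Or.inl (hside hv h (by decide))
    · exact Or.inl (signVector_mem_chambersOnSide (by decide) hv (sign_pos h))
  have hres : (chambers fun i ↦ (ω (some i)).comp g) ⊆
      chambersOnSide ω 1 ∩ chambersOnSide ω (-1) := by
    rintro _ ⟨x, hx, rfl⟩
    have hx0 : ω none (g x) = 0 := hg (mem_range_self x)
    exact ⟨hside hx hx0 (by decide), hside hx hx0 (by decide)⟩
  calc _ ≤ _ := add_le_add (ncard_le_ncard hdel) (ncard_le_ncard hres)
    _ = _ := ncard_union_add_ncard_inter _ _
    _ ≤ _ := ncard_chambersOnSide_add_le ω (by decide)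

end Chambers

/-! ### The dimension is at most the number of chambers -/

section UpperBound

theorem finrank_quotient_le_of_surjective {K A B : Type*} [Field K] [CommRing A] [CommRing B]
    [Algebra K A] [Algebra K B] {I : Ideal A} {J : Ideal B} [Module.Finite K (A ⧸ I)]
    (f : A →ₐ[K] B) (hf : I ≤ J.comap f)
    (h : Function.Surjective fun a ↦ Ideal.Quotient.mk J (f a)) :
    Module.finrank K (B ⧸ J) ≤ Module.finrank K (A ⧸ I) := by
  refine LinearMap.finrank_le_finrank_of_surjective
    (f := (Ideal.quotientMapₐ J f hf).toLinearMap) fun y ↦ ?_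
  obtain ⟨a, rfl⟩ := h y
  exact ⟨Ideal.Quotient.mk I a, rfl⟩

variable {𝕜 E ι : Type*} [Field 𝕜] [LinearOrder 𝕜] [AddCommGroup E] [Module 𝕜 E]

theorem cordovilIdeal_eq_top_of_forall_eq_zero [DecidableEq ι] {ω : ι → E →ᵃ[𝕜] 𝕜} {i : ι}
    (h : ∀ v, ω i v = 0) : cordovilIdeal ω = ⊤ := by
  have hrel : circuitRel {i} ∅ ∈ cordovilIdeal ω := by
    refine circuitRel_mem_cordovilIdeal (by simp) ?_ ⟨0, by simp [flat, h]⟩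
    simp [cell, h]
  rw [Ideal.eq_top_iff_one, ← neg_mem_iff]
  simpa [circuitRel, boundary] using hrel

theorem X_mem_cordovilIdeal_of_forall_ne_zero [DecidableEq ι] {ω : ι → E →ᵃ[𝕜] 𝕜} {i : ι}
    (h : ∀ v, ω i v ≠ 0) : X i ∈ cordovilIdeal ω := by
  have hflat : flat ω {i} = ∅ := by simp [flat, h]
  simpa using prod_X_mem_cordovilIdeal hflat

theorem finrank_quotient_cordovilIdeal_le_comp {κ : Type*} [Finite κ] [DecidableEq ι]
    [DecidableEq κ] (ω : ι → E →ᵃ[𝕜] 𝕜) (s : κ ↪ ι) (hs : ∀ i ∉ range s, ∀ v, ω i v ≠ 0) :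
    Module.finrank ℚ (MvPolynomial ι ℚ ⧸ cordovilIdeal ω) ≤
      Module.finrank ℚ (MvPolynomial κ ℚ ⧸ cordovilIdeal fun k ↦ ω (s k)) := by
  have := finite_quotient_cordovilIdeal fun k ↦ ω (s k)
  refine finrank_quotient_le_of_surjective (rename s)
    (cordovilIdeal_comp_le_comap_rename ω s) fun y ↦ ?_
  obtain ⟨r, rfl⟩ := Ideal.Quotient.mk_surjective y
  change ∃ a, Ideal.Quotient.mk (cordovilIdeal ω) (rename s a) = Ideal.Quotient.mk _ r
  induction r using MvPolynomial.induction_on with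
  | C c => exact ⟨C c, by rw [rename_C]⟩
  | add p q hp hq =>
    obtain ⟨⟨a, ha⟩, b, hb⟩ := And.intro hp hq
    exact ⟨a + b, by rw [map_add, map_add, map_add, ha, hb]⟩
  | mul_X p i hp =>
    obtain ⟨a, ha⟩ := hp
    by_cases hi : i ∈ range s
    · obtain ⟨k, rfl⟩ := hi
      exact ⟨a * X k, by rw [map_mul, map_mul, map_mul, ha, rename_X]⟩
    · have hX := X_mem_cordovilIdeal_of_forall_ne_zero (hs i hi)
      exact ⟨0, by rw [map_mul, Ideal.Quotient.eq_zero_iff_mem.2 hX]; simp⟩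

theorem ncard_chambers_comp_le {κ : Type*} [Finite ι] (ω : ι → E →ᵃ[𝕜] 𝕜) (s : κ → ι)
    (hs : ∀ i ∉ range s, ∀ v, ω i v ≠ 0) :
    (chambers fun k ↦ ω (s k)).ncard ≤ (chambers ω).ncard := by
  refine (ncard_le_ncard ?_).trans (ncard_image_le (f := fun σ k ↦ σ (s k)))
  rintro _ ⟨v, hv, rfl⟩
  refine ⟨_, ⟨v, fun i ↦ ?_, rfl⟩, rfl⟩
  by_cases hi : i ∈ range s
  · obtain ⟨k, rfl⟩ := hi
    exact hv k
  · exact hs i hi v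

variable [IsStrictOrderedRing 𝕜] [Finite ι]

theorem finrank_quotient_cordovilIdeal_le_ncard_chambers_option [DecidableEq ι]
    (ih : ∀ ω : ι → E →ᵃ[𝕜] 𝕜,
      Module.finrank ℚ (MvPolynomial ι ℚ ⧸ cordovilIdeal ω) ≤ (chambers ω).ncard)
    (ω : Option ι → E →ᵃ[𝕜] 𝕜) :
    Module.finrank ℚ (MvPolynomial (Option ι) ℚ ⧸ cordovilIdeal ω) ≤ (chambers ω).ncard := by
  by_cases hconst : (ω none).linear = 0
  · have hω (v : E) : ω none v = ω none 0 := by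
      simpa [hconst] using (ω none).map_vadd 0 v
    by_cases h0 : ω none 0 = 0
    · rw [cordovilIdeal_eq_top_of_forall_eq_zero fun v ↦ (hω v).trans h0,
        Module.finrank_zero_of_subsingleton]
      exact Nat.zero_le _
    · have hne : ∀ j ∉ range (some : ι → Option ι), ∀ v, ω j v ≠ 0 := by
        rintro (_ | i) hj v
        · rwa [hω]
        · exact (hj (mem_range_self i)).elim
      calc _ ≤ _ := finrank_quotient_cordovilIdeal_le_comp ω .some hne
        _ ≤ _ := ih fun i ↦ ω (some i)
        _ ≤ _ := ncard_chambers_comp_le ω some hne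
  · obtain ⟨g, hg⟩ := exists_range_eq_zeroSet hconst
    calc _ ≤ _ := finrank_quotient_cordovilIdeal_le_add hg
      _ ≤ _ := add_le_add (ih _) (ih _)
      _ ≤ _ := ncard_chambers_deletion_add_restriction_le hconst hg.subset

theorem finrank_quotient_cordovilIdeal_le_ncard_chambers [DecidableEq ι]
    (ω : ι → E →ᵃ[𝕜] 𝕜) :
    Module.finrank ℚ (MvPolynomial ι ℚ ⧸ cordovilIdeal ω) ≤ (chambers ω).ncard := by
  refine Finite.induction_empty_option (P := fun ι ↦ Finite ι → ∀ [DecidableEq ι]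
    (ω : ι → E →ᵃ[𝕜] 𝕜), Module.finrank ℚ (MvPolynomial ι ℚ ⧸ cordovilIdeal ω) ≤
      (chambers ω).ncard) ?_ ?_ ?_ ι ‹_› ω
  · intro α β e ih _ _ ω
    classical
    have := Finite.of_equiv β e.symm
    have he : ∀ i ∉ range e, ∀ v, ω i v ≠ 0 := fun i hi ↦ (hi (e.surjective i)).elim
    calc _ ≤ _ := finrank_quotient_cordovilIdeal_le_comp ω e.toEmbedding he
      _ ≤ _ := ih this fun i ↦ ω (e i)
      _ ≤ _ := ncard_chambers_comp_le ω e he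
  · intro _ _ ω
    have hfinrank : Module.finrank ℚ (MvPolynomial PEmpty ℚ) = 1 := by
      rw [(isEmptyAlgEquiv ℚ PEmpty).toLinearEquiv.finrank_eq, Module.finrank_self]
    have : Module.Finite ℚ (MvPolynomial PEmpty ℚ) :=
      Module.finite_of_finrank_pos (hfinrank ▸ one_pos)
    have hne : (chambers ω).Nonempty := ⟨_, 0, fun i ↦ i.elim, rfl⟩
    calc _ ≤ Module.finrank ℚ (MvPolynomial PEmpty ℚ) :=
          LinearMap.finrank_le_finrank_of_surjective
            (f := (Ideal.Quotient.mkₐ ℚ (cordovilIdeal ω)).toLinearMap)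
            Ideal.Quotient.mk_surjective
      _ ≤ _ := hfinrank ▸ hne.ncard_pos
  · intro α _ ih _ inst ω
    classical
    obtain rfl : inst = Option.instDecidableEq := Subsingleton.elim _ _
    exact finrank_quotient_cordovilIdeal_le_ncard_chambers_option (ih inferInstance) ω

end UpperBound

/-! ### Ideals of leading forms -/

section LeadingForms

variable {σ R K : Type*} [CommRing R] [Field K]

/-- The polynomials of total degree less than `d`; for `d = 0` only the zero polynomial. -/
noncomputable def degreeLT (σ R : Type*) [CommRing R] (d : ℕ) : Submodule R (MvPolynomial σ R) :=
  ⨅ n ≥ d, LinearMap.ker (homogeneousComponent n)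

theorem mem_degreeLT {d : ℕ} {p : MvPolynomial σ R} :
    p ∈ degreeLT σ R d ↔ ∀ n ≥ d, homogeneousComponent n p = 0 := by
  simp [degreeLT]

theorem degreeLT_mono {d e : ℕ} (h : d ≤ e) : degreeLT σ R d ≤ degreeLT σ R e := fun _ hp ↦
  mem_degreeLT.2 fun n hn ↦ mem_degreeLT.1 hp n (h.trans hn)

theorem degreeLT_zero : degreeLT σ R 0 = ⊥ := by
  refine eq_bot_iff.2 fun p hp ↦ ?_
  rw [Submodule.mem_bot, ← sum_homogeneousComponent p]
  exact Finset.sum_eq_zero fun n _ ↦ mem_degreeLT.1 hp n n.zero_le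

theorem mem_degreeLT_totalDegree_add_one (p : MvPolynomial σ R) :
    p ∈ degreeLT σ R (p.totalDegree + 1) :=
  mem_degreeLT.2 fun n hn ↦ homogeneousComponent_eq_zero n p hn

theorem mem_degreeLT_of_isHomogeneous {d n : ℕ} {p : MvPolynomial σ R} (hp : p.IsHomogeneous n)
    (h : n < d) : p ∈ degreeLT σ R d :=
  mem_degreeLT.2 fun m hm ↦ by rw [homogeneousComponent_of_mem hp, if_neg (by omega)]

theorem mul_mem_degreeLT {d n : ℕ} {p q : MvPolynomial σ R} (hp : p.IsHomogeneous n)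
    (hq : q ∈ degreeLT σ R d) : p * q ∈ degreeLT σ R (n + d) :=
  mem_degreeLT.2 fun m hm ↦ by
    rw [homogeneousComponent_mul_of_isHomogeneous hp, if_pos (by omega),
      mem_degreeLT.1 hq _ (by omega), mul_zero]

theorem sub_homogeneousComponent_mem_degreeLT {d : ℕ} {p : MvPolynomial σ R}
    (hp : p ∈ degreeLT σ R (d + 1)) : p - homogeneousComponent d p ∈ degreeLT σ R d := by
  refine mem_degreeLT.2 fun n hn ↦ ?_
  rw [map_sub, homogeneousComponent_of_mem (homogeneousComponent_mem d p)]
  rcases hn.eq_or_lt with rfl | hn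
  · rw [if_pos rfl, sub_self]
  · rw [if_neg hn.ne', sub_zero, mem_degreeLT.1 hp n hn]

/-- The ideal generated by the leading forms of the elements of `J`. It is encoded by the
condition that each homogeneous component can be completed to an element of `J` by terms of
lower degree. -/
noncomputable def initialIdeal (J : Ideal (MvPolynomial σ R)) : Ideal (MvPolynomial σ R) where
  carrier := {p | ∀ d, ∃ q ∈ degreeLT σ R d, homogeneousComponent d p + q ∈ J}
  zero_mem' d := ⟨0, zero_mem _, by simp⟩
  add_mem' {p p'} hp hp' d := by
    obtain ⟨⟨q, hq, hpq⟩, q', hq', hpq'⟩ := And.intro (hp d) (hp' d)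
    refine ⟨q + q', add_mem hq hq', ?_⟩
    rw [map_add, add_add_add_comm]
    exact add_mem hpq hpq'
  smul_mem' a p hp d := by
    induction a using MvPolynomial.induction_on generalizing p d with
    | C c =>
      obtain ⟨q, hq, hpq⟩ := hp d
      refine ⟨c • q, Submodule.smul_mem _ c hq, ?_⟩
      rw [smul_eq_mul, homogeneousComponent_C_mul, smul_eq_C_mul, ← mul_add]
      exact J.mul_mem_left _ hpq
    | add a b ha hb =>
      obtain ⟨⟨q, hq, hpq⟩, q', hq', hpq'⟩ := And.intro (ha p hp d) (hb p hp d)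
      refine ⟨q + q', add_mem hq hq', ?_⟩
      rw [add_smul, map_add, add_add_add_comm]
      exact add_mem hpq hpq'
    | mul_X a i ha =>
      rw [smul_eq_mul, mul_assoc]
      refine ha _ (fun e ↦ ?_) d
      rw [homogeneousComponent_mul_of_isHomogeneous (isHomogeneous_X R i)]
      split_ifs with he
      · obtain ⟨q, hq, hpq⟩ := hp (e - 1)
        refine ⟨X i * q, ?_, mul_add (X i) _ q ▸ J.mul_mem_left _ hpq⟩
        simpa [Nat.add_sub_cancel' he] using mul_mem_degreeLT (isHomogeneous_X R i) hq
      · exact ⟨0, zero_mem _, by simp⟩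

theorem mem_initialIdeal_of_isHomogeneous {J : Ideal (MvPolynomial σ R)} {d : ℕ}
    {p q : MvPolynomial σ R} (hp : p.IsHomogeneous d) (hq : q ∈ degreeLT σ R d)
    (h : p + q ∈ J) : p ∈ initialIdeal J := fun n ↦ by
  rw [homogeneousComponent_of_mem hp]
  split_ifs with hn
  · exact ⟨q, hn ▸ hq, h⟩
  · exact ⟨0, zero_mem _, by simp⟩

theorem exists_finset_card_le_finrank_span_image_eq_top {ι M : Type*} [AddCommGroup M]
    [Module K M] [Module.Finite K M] (v : ι → M) (hv : Submodule.span K (range v) = ⊤) :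
    ∃ s : Finset ι, s.card ≤ Module.finrank K M ∧ Submodule.span K (v '' s) = ⊤ := by
  obtain ⟨κ, a, -, hspan, hli⟩ := exists_linearIndependent' K v
  have := hli.finite
  have := Fintype.ofFinite κ
  classical
  refine ⟨Finset.univ.image a, Finset.card_image_le.trans hli.fintype_card_le_finrank, ?_⟩
  rw [Finset.coe_image, Finset.coe_univ, image_univ, ← range_comp, hspan, hv]

theorem homogeneousComponent_mem_span_monomials {s : Set (σ →₀ ℕ)} {p : MvPolynomial σ R}
    (hp : p ∈ Submodule.span R ((monomial · (1 : R)) '' s)) (d : ℕ) :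
    homogeneousComponent d p ∈ Submodule.span R ((monomial · (1 : R)) '' s) := by
  induction hp using Submodule.span_induction with
  | mem p hp =>
    obtain ⟨m, hm, rfl⟩ := hp
    rw [homogeneousComponent_of_mem (isHomogeneous_monomial (1 : R) rfl)]
    split_ifs
    · exact Submodule.subset_span ⟨m, hm, rfl⟩
    · exact zero_mem _
  | zero => simp
  | add p q _ _ hp hq => simpa using add_mem hp hq
  | smul c p _ hp => simpa using Submodule.smul_mem _ c hp

theorem exists_mem_span_monomials_sub_mem {I J : Ideal (MvPolynomial σ R)}
    (h : I ≤ initialIdeal J) {s : Set (σ →₀ ℕ)}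
    (hs : ∀ p, ∃ l ∈ Submodule.span R ((monomial · (1 : R)) '' s), p - l ∈ I)
    (p : MvPolynomial σ R) :
    ∃ l ∈ Submodule.span R ((monomial · (1 : R)) '' s), p - l ∈ J := by
  suffices hd : ∀ d, ∀ p ∈ degreeLT σ R d,
      ∃ l ∈ Submodule.span R ((monomial · (1 : R)) '' s), p - l ∈ J from
    hd _ p (mem_degreeLT_totalDegree_add_one p)
  intro d
  induction d with
  | zero =>
    intro p hp
    rw [degreeLT_zero, Submodule.mem_bot] at hp
    exact ⟨0, zero_mem _, by simp [hp]⟩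
  | succ d ih =>
    intro p hp
    obtain ⟨l, hl, hpl⟩ := hs p
    obtain ⟨q, hq, hqJ⟩ := h hpl d
    obtain ⟨l', hl', hJ⟩ := ih _ (sub_mem (sub_homogeneousComponent_mem_degreeLT hp) hq)
    refine ⟨_, add_mem (homogeneousComponent_mem_span_monomials hl d) hl', ?_⟩
    convert add_mem hqJ hJ using 1
    rw [map_sub]
    ring

theorem finrank_quotient_le_of_le_initialIdeal {I J : Ideal (MvPolynomial σ K)}
    [Module.Finite K (MvPolynomial σ K ⧸ I)] (h : I ≤ initialIdeal J) :
    Module.finrank K (MvPolynomial σ K ⧸ J) ≤ Module.finrank K (MvPolynomial σ K ⧸ I) := by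
  let projI := (Ideal.Quotient.mkₐ K I).toLinearMap
  let projJ := (Ideal.Quotient.mkₐ K J).toLinearMap
  let mon : (σ →₀ ℕ) → MvPolynomial σ K := fun m ↦ monomial m 1
  have hmon : Submodule.span K (range fun m ↦ projI (mon m)) = ⊤ := by
    have hbasis : Submodule.span K (range mon) = ⊤ := by
      simpa only [coe_basisMonomials] using (basisMonomials σ K).span_eq
    rw [range_comp' projI, ← Submodule.map_span, hbasis, Submodule.map_top,
      LinearMap.range_eq_top.2 Ideal.Quotient.mk_surjective]
  obtain ⟨s, hcard, hspan⟩ := exists_finset_card_le_finrank_span_image_eq_top _ hmon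
  rw [← image_image projI, ← Submodule.map_span] at hspan
  have hI (p : MvPolynomial σ K) : ∃ l ∈ Submodule.span K (mon '' s), p - l ∈ I := by
    obtain ⟨l, hl, hlp⟩ := hspan.ge (Submodule.mem_top (x := projI p))
    exact ⟨l, hl, Ideal.Quotient.eq.1 hlp.symm⟩
  have hJ : (Submodule.span K (mon '' s)).map projJ = ⊤ := by
    refine eq_top_iff.2 fun x _ ↦ ?_
    obtain ⟨p, rfl⟩ := Ideal.Quotient.mk_surjective x
    obtain ⟨l, hl, hpl⟩ := exists_mem_span_monomials_sub_mem h hI p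
    exact ⟨l, hl, (Ideal.Quotient.eq.2 hpl).symm⟩
  classical
  have := FiniteDimensional.span_of_finite K (s.finite_toSet.image mon)
  calc Module.finrank K (MvPolynomial σ K ⧸ J)
      = Module.finrank K ((Submodule.span K (mon '' s)).map projJ) := by rw [hJ, finrank_top]
    _ ≤ Module.finrank K (Submodule.span K (mon '' s)) := Submodule.finrank_map_le _ _
    _ ≤ s.card := by
      rw [← Finset.coe_image]
      exact (finrank_span_finset_le_card _).trans Finset.card_image_le
    _ ≤ Module.finrank K (MvPolynomial σ K ⧸ I) := hcard

end LeadingForms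

/-! ### Central arrangements -/

section Tail

variable {ι : Type*} [DecidableEq ι]

/-- The part of `∏ i ∈ S, (X i - 1)` of degree less than `#S - 1`. -/
noncomputable def tail (S : Finset ι) : MvPolynomial ι ℚ :=
  ∏ i ∈ S, (X i - 1) - ∏ i ∈ S, X i + boundary S

theorem tail_empty : tail (∅ : Finset ι) = 0 := by simp [tail, boundary]

theorem tail_mem_degreeLT (S : Finset ι) : tail S ∈ degreeLT ι ℚ (S.card - 1) := by
  induction S using Finset.induction_on with
  | empty => simp [tail_empty]
  | insert a S ha ih =>
    have htail : tail (insert a S) = boundary S + X a * tail S - tail S := by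
      rw [tail, Finset.prod_insert ha, Finset.prod_insert ha, boundary_insert ha, tail]
      ring
    rw [htail, Finset.card_insert_of_notMem ha, Nat.add_sub_cancel]
    rcases S.eq_empty_or_nonempty with rfl | hS
    · simp [tail_empty, boundary]
    · have hcard := hS.card_pos
      refine sub_mem (add_mem ?_ ?_) (degreeLT_mono (Nat.sub_le _ _) ih)
      · exact mem_degreeLT_of_isHomogeneous (isHomogeneous_boundary S) (by omega)
      · exact degreeLT_mono (by omega) (mul_mem_degreeLT (isHomogeneous_X ℚ a) ih)

theorem prod_X_mul_tail_mem_degreeLT (S T : Finset ι) :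
    (∏ i ∈ S, X i) * tail T ∈ degreeLT ι ℚ (S.card + T.card - 1) := by
  rcases T.eq_empty_or_nonempty with rfl | hT
  · simp [tail_empty]
  · rw [Nat.add_sub_assoc hT.card_pos]
    exact mul_mem_degreeLT (isHomogeneous_prod_X S) (tail_mem_degreeLT T)

end Tail

section Central

variable {𝕜 E ι : Type*} [Field 𝕜] [LinearOrder 𝕜] [AddCommGroup E] [Module 𝕜 E]

/-- Evaluation of polynomials on the chambers, the variable `X i` being sent to the indicator
function of the chambers on the positive side of the `i`-th hyperplane. -/
noncomputable def chamberEval (ω : ι → E →ᵃ[𝕜] 𝕜) :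
    MvPolynomial ι ℚ →ₐ[ℚ] chambers ω → ℚ :=
  aeval fun i σ ↦ if σ.1 i = 1 then 1 else 0

@[simp]
theorem chamberEval_X (ω : ι → E →ᵃ[𝕜] 𝕜) (i : ι) (σ : chambers ω) :
    chamberEval ω (X i) σ = if σ.1 i = 1 then 1 else 0 := by
  simp [chamberEval]

theorem ne_zero_of_mem_chambers {ω : ι → E →ᵃ[𝕜] 𝕜} {σ : ι → SignType} (hσ : σ ∈ chambers ω)
    (i : ι) : σ i ≠ 0 := by
  obtain ⟨v, hv, rfl⟩ := hσ
  exact sign_ne_zero.2 (hv i)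

theorem eq_of_mem_chambers {ω : ι → E →ᵃ[𝕜] 𝕜} {σ τ : ι → SignType} (hσ : σ ∈ chambers ω)
    (hτ : τ ∈ chambers ω) (h : ∀ i, σ i = 1 ↔ τ i = 1) : σ = τ := by
  funext i
  have sign_eq : ∀ s t : SignType, s ≠ 0 → t ≠ 0 → (s = 1 ↔ t = 1) → s = t := by decide
  exact sign_eq _ _ (ne_zero_of_mem_chambers hσ i) (ne_zero_of_mem_chambers hτ i) (h i)

theorem chamberEval_surjective [Finite ι] (ω : ι → E →ᵃ[𝕜] 𝕜) :
    Function.Surjective (chamberEval ω) := by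
  classical
  have := Fintype.ofFinite ι
  have := Fintype.ofFinite (chambers ω)
  have hsingle (σ : chambers ω) :
      chamberEval ω (∏ i, if σ.1 i = 1 then X i else 1 - X i) = Pi.single σ 1 := by
    funext τ
    have hfactor (i : ι) : chamberEval ω (if σ.1 i = 1 then X i else 1 - X i) τ =
        if (σ.1 i = 1 ↔ τ.1 i = 1) then 1 else 0 := by
      by_cases hσ : σ.1 i = 1 <;> by_cases hτ : τ.1 i = 1 <;> simp [hσ, hτ]
    rw [map_prod, Finset.prod_apply, Finset.prod_congr rfl fun i _ ↦ hfactor i,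
      Fintype.prod_boole, Pi.single_apply]
    refine if_congr ⟨fun h ↦ (Subtype.ext (eq_of_mem_chambers σ.2 τ.2 h)).symm, ?_⟩ rfl rfl
    rintro rfl i
    rfl
  intro f
  refine ⟨∑ σ, f σ • ∏ i, if σ.1 i = 1 then X i else 1 - X i, ?_⟩
  rw [map_sum, Finset.sum_congr rfl fun σ _ ↦ by rw [map_smul, hsingle]]
  funext τ
  simp [Pi.single_apply]

theorem chamberEval_prod_X_mul_prod_X_sub_one {ω : ι → E →ᵃ[𝕜] 𝕜} {Sp Sm : Finset ι}
    (h : cell ω Sp Sm = ∅) :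
    chamberEval ω ((∏ i ∈ Sp, X i) * ∏ i ∈ Sm, (X i - 1)) = 0 := by
  funext ⟨_, v, hv, rfl⟩
  by_contra hne
  simp only [map_mul, map_prod, map_sub, map_one, Pi.mul_apply, Finset.prod_apply, Pi.sub_apply,
    Pi.one_apply, Pi.zero_apply, mul_eq_zero, Finset.prod_eq_zero_iff, chamberEval_X] at hne
  push Not at hne
  refine h.subset (show v ∈ cell ω Sp Sm from ⟨fun i hi ↦ ?_, fun i hi ↦ ?_⟩)
  · simpa [signVector, sign_eq_one_iff] using hne.1 i hi
  · refine (hv i).lt_or_gt.resolve_right fun hpos ↦ hne.2 i hi ?_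
    simp [signVector, hpos]

variable [IsStrictOrderedRing 𝕜]

theorem cell_eq_empty_comm {ω : ι → E →ᵃ[𝕜] 𝕜} {c : E} (hc : ∀ i, ω i c = 0)
    {Sp Sm : Finset ι} (h : cell ω Sp Sm = ∅) : cell ω Sm Sp = ∅ := by
  refine eq_empty_of_forall_notMem fun v hv ↦
    eq_empty_iff_forall_notMem.1 h (AffineMap.lineMap v c (2 : 𝕜)) ?_
  have hneg (i : ι) : ω i (AffineMap.lineMap v c (2 : 𝕜)) = -ω i v := by
    rw [AffineMap.apply_lineMap, hc, AffineMap.lineMap_apply]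
    simp
    ring
  refine ⟨fun i hi ↦ ?_, fun i hi ↦ ?_⟩
  · rw [hneg]
    exact neg_pos.2 (hv.2 i hi)
  · rw [hneg]
    exact neg_neg_iff_pos.2 (hv.1 i hi)

theorem cordovilIdeal_le_initialIdeal_ker_chamberEval [DecidableEq ι] {ω : ι → E →ᵃ[𝕜] 𝕜} {c : E}
    (hc : ∀ i, ω i c = 0) : cordovilIdeal ω ≤ initialIdeal (RingHom.ker (chamberEval ω)) := by
  refine cordovilIdeal_le (fun i ↦ ?_) (fun S hS ↦ ?_) fun Sp Sm _ hcell _ ↦ ?_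
  · refine mem_initialIdeal_of_isHomogeneous (isHomogeneous_X_pow i 2) (q := -X i)
      (neg_mem (mem_degreeLT_of_isHomogeneous (isHomogeneous_X ℚ i) one_lt_two)) ?_
    rw [RingHom.mem_ker]
    funext σ
    simp
  · exact (hS.subset (show c ∈ flat ω S from fun i _ ↦ hc i)).elim
  · have hpos := chamberEval_prod_X_mul_prod_X_sub_one hcell
    have hneg := chamberEval_prod_X_mul_prod_X_sub_one (cell_eq_empty_comm hc hcell)
    refine mem_initialIdeal_of_isHomogeneous (isHomogeneous_circuitRel Sp Sm)
      (q := (∏ i ∈ Sm, X i) * tail Sp - (∏ i ∈ Sp, X i) * tail Sm) (sub_mem ?_ ?_) ?_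
    · rw [add_comm]
      exact prod_X_mul_tail_mem_degreeLT Sm Sp
    · exact prod_X_mul_tail_mem_degreeLT Sp Sm
    · have hrel : circuitRel Sp Sm + ((∏ i ∈ Sm, X i) * tail Sp - (∏ i ∈ Sp, X i) * tail Sm) =
          (∏ i ∈ Sm, X i) * ∏ i ∈ Sp, (X i - 1) - (∏ i ∈ Sp, X i) * ∏ i ∈ Sm, (X i - 1) := by
        rw [circuitRel, tail, tail]
        ring
      rw [RingHom.mem_ker, hrel, map_sub, hpos, hneg, sub_zero]

theorem ncard_chambers_le_finrank_quotient_cordovilIdeal [Finite ι] [DecidableEq ι]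
    {ω : ι → E →ᵃ[𝕜] 𝕜} {c : E} (hc : ∀ i, ω i c = 0) :
    (chambers ω).ncard ≤ Module.finrank ℚ (MvPolynomial ι ℚ ⧸ cordovilIdeal ω) := by
  have := finite_quotient_cordovilIdeal ω
  have := Fintype.ofFinite (chambers ω)
  calc (chambers ω).ncard = Module.finrank ℚ (chambers ω → ℚ) := by
        rw [Module.finrank_fintype_fun_eq_card, ← Nat.card_eq_fintype_card, Nat.card_coe_set_eq]
    _ = Module.finrank ℚ (MvPolynomial ι ℚ ⧸ RingHom.ker (chamberEval ω)) :=
        (Ideal.quotientKerAlgEquivOfSurjective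
          (chamberEval_surjective ω)).toLinearEquiv.finrank_eq.symm
    _ ≤ _ := finrank_quotient_le_of_le_initialIdeal
        (cordovilIdeal_le_initialIdeal_ker_chamberEval hc)

end Central

/-! ### The cone of an arrangement -/

section Cone

variable {𝕜 E ι : Type*} [Field 𝕜] [AddCommGroup E] [Module 𝕜 E]

/-- The linear forms of the cone over an arrangement, as affine functions. The extra hyperplane
`none` is the hyperplane at infinity, and the slice `E × {1}` carries the original arrangement. -/
def cone (ω : ι → E →ᵃ[𝕜] 𝕜) : Option ι → (E × 𝕜) →ᵃ[𝕜] 𝕜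
  | none => (-LinearMap.snd 𝕜 E 𝕜).toAffineMap
  | some i => ((ω i).linear.comp (LinearMap.fst 𝕜 E 𝕜) + ω i 0 • LinearMap.snd 𝕜 E 𝕜).toAffineMap

variable (ω : ι → E →ᵃ[𝕜] 𝕜)

theorem cone_none (p : E × 𝕜) : cone ω none p = -p.2 := rfl

theorem cone_some (i : ι) (p : E × 𝕜) : cone ω (some i) p = (ω i).linear p.1 + ω i 0 * p.2 := rfl

theorem cone_smul (j : Option ι) (c : 𝕜) (p : E × 𝕜) : cone ω j (c • p) = c * cone ω j p := by
  cases j with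
  | none => simp [cone_none]
  | some i =>
    simp only [cone_some, Prod.smul_fst, Prod.smul_snd, map_smul, smul_eq_mul]
    ring

theorem cone_apply_zero (j : Option ι) : cone ω j 0 = 0 := by
  simpa using cone_smul ω j 0 0

theorem cone_some_mk_one (i : ι) (v : E) : cone ω (some i) (v, 1) = ω i v := by
  have h := (ω i).map_vadd 0 v
  rw [vadd_eq_add, vadd_eq_add, add_zero] at h
  rw [cone_some, mul_one, h]

theorem apply_add_sub_smul_eq_cone {i : ι} {v : E} (hv : ω i v = 0) (p : E × 𝕜) :
    ω i (v + (p.1 - p.2 • v)) = cone ω (some i) p := by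
  have h0 : (ω i).linear v + ω i 0 = 0 := by
    rw [← hv, ← cone_some_mk_one ω i v, cone_some, mul_one]
  have hp := (ω i).map_vadd v (p.1 - p.2 • v)
  rw [vadd_eq_add, vadd_eq_add, hv, map_sub, map_smul, smul_eq_mul] at hp
  rw [add_comm v, hp, cone_some]
  linear_combination -p.2 * h0

theorem exists_forall_sum_mul_cone_eq_snd {S : Finset ι} (hS : flat ω S = ∅) :
    ∃ μ : ι → 𝕜, ∀ p : E × 𝕜, ∑ i ∈ S, μ i * cone ω (some i) p = p.2 := by
  have hspan : LinearMap.snd 𝕜 E 𝕜 ∈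
      Submodule.span 𝕜 ((fun i ↦ (cone ω (some i)).linear) '' S) := by
    rw [image_eq_range]
    refine mem_span_of_iInf_ker_le_ker fun p hp ↦ ?_
    rw [Submodule.mem_iInf] at hp
    by_contra hr
    have hr' : p.2 ≠ 0 := hr
    refine hS.subset (show p.2⁻¹ • p.1 ∈ flat ω S from fun i hi ↦ ?_)
    have hpi : cone ω (some i) p = 0 := hp ⟨i, hi⟩
    have hscale : p.2⁻¹ • p = (p.2⁻¹ • p.1, (1 : 𝕜)) := Prod.ext rfl (inv_mul_cancel₀ hr')
    rw [← cone_some_mk_one, ← hscale, cone_smul, hpi, mul_zero]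
  obtain ⟨μ, hμ⟩ := (Submodule.mem_span_image_finset_iff_exists_fun' 𝕜).1 hspan
  refine ⟨μ, fun p ↦ ?_⟩
  have hp := DFunLike.congr_fun hμ p
  rw [LinearMap.sum_apply] at hp
  exact hp

variable [LinearOrder 𝕜]

theorem circuitRel_cone_mem_cordovilIdeal [DecidableEq ι] {Sp Sm : Finset (Option ι)}
    (hd : Disjoint Sp Sm) (hcell : cell (cone ω) Sp Sm = ∅) :
    circuitRel Sp Sm ∈ cordovilIdeal (cone ω) :=
  circuitRel_mem_cordovilIdeal hd hcell ⟨0, fun j _ ↦ cone_apply_zero ω j⟩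

variable [IsStrictOrderedRing 𝕜]

theorem two_mul_ncard_chambers_le_ncard_chambers_cone [Finite ι] :
    2 * (chambers ω).ncard ≤ (chambers (cone ω)).ncard := by
  have hinfty : chambers ω ⊆ chambersOnSide (cone ω) (-1) := by
    rintro _ ⟨v, hv, rfl⟩
    have hslice : signVector (fun i ↦ cone ω (some i)) (v, 1) = signVector ω v :=
      funext fun i ↦ by rw [signVector, cone_some_mk_one, signVector]
    rw [← hslice]
    refine signVector_mem_chambersOnSide (by decide) (fun i ↦ ?_) (sign_neg (by simp [cone_none]))
    rw [cone_some_mk_one]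
    exact hv i
  have hneg : Neg.neg '' chambers ω ⊆ chambersOnSide (cone ω) 1 := by
    rintro _ ⟨_, ⟨v, hv, rfl⟩, rfl⟩
    have hopp (i : ι) : cone ω (some i) (-(v, 1)) = -ω i v := by
      rw [← neg_one_smul 𝕜, cone_smul, cone_some_mk_one, neg_one_mul]
    have hslice : signVector (fun i ↦ cone ω (some i)) (-(v, 1)) = -signVector ω v :=
      funext fun i ↦ by rw [signVector, hopp, Left.sign_neg]; rfl
    rw [← hslice]
    refine signVector_mem_chambersOnSide (by decide) (fun i ↦ ?_) (sign_pos (by simp [cone_none]))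
    rw [hopp]
    exact neg_ne_zero.2 (hv i)
  rw [two_mul]
  calc _ = (chambers ω).ncard + (Neg.neg '' chambers ω).ncard := by
        rw [ncard_image_of_injective _ neg_injective]
    _ ≤ _ := add_le_add (ncard_le_ncard hinfty) (ncard_le_ncard hneg)
    _ ≤ _ := ncard_chambersOnSide_add_le _ (by decide)

variable [DecidableEq ι]

/-- A linear dependence expressing the coordinate at infinity through the forms of `S` is a signed
circuit of the cone; its leading term is a squarefree monomial supported in `S`. -/
theorem exists_rename_prod_X_sub_mem_cordovilIdeal_cone {S : Finset ι} (hS : flat ω S = ∅) :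
    ∃ q, rename some (∏ i ∈ S, X i) - X none * rename some q ∈ cordovilIdeal (cone ω) := by
  obtain ⟨μ, hμ⟩ := exists_forall_sum_mul_cone_eq_snd ω hS
  let Sp := S.filter fun i ↦ 0 < μ i
  let Sm := S.filter fun i ↦ μ i < 0
  have hd : Disjoint Sp Sm := Finset.disjoint_filter.2 fun i _ h ↦ h.not_gt
  have hsub : Sp ∪ Sm ⊆ S :=
    Finset.union_subset (Finset.filter_subset _ _) (Finset.filter_subset _ _)
  have hcell : cell (cone ω) (insert none (Sp.map .some)) (Sm.map .some) = ∅ := by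
    refine eq_empty_of_forall_notMem fun p ⟨hp, hm⟩ ↦ ?_
    have hsnd : p.2 < 0 := by simpa [cone_none] using hp none (Finset.mem_insert_self _ _)
    rw [← hμ p] at hsnd
    refine hsnd.not_ge (Finset.sum_nonneg fun i hi ↦ ?_)
    rcases lt_trichotomy (μ i) 0 with h | h | h
    · exact (mul_pos_of_neg_of_neg h (hm _ (by simp [Sm, hi, h]))).le
    · rw [h, zero_mul]
    · exact (mul_pos h (hp _ (by simp [Sp, hi, h]))).le
  have hrel : X none * rename some (circuitRel Sp Sm) -
      (∏ i ∈ Sp, X (some i)) * ∏ i ∈ Sm, X (some i) ∈ cordovilIdeal (cone ω) := by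
    have hmem := circuitRel_cone_mem_cordovilIdeal ω
      (Finset.disjoint_insert_left.2 ⟨by simp, (Finset.disjoint_map _).2 hd⟩) hcell
    simpa [circuitRel_insert_left, rename_some_circuitRel, Finset.prod_map] using hmem
  refine ⟨(∏ i ∈ S \ (Sp ∪ Sm), X i) * circuitRel Sp Sm, ?_⟩
  convert neg_mem (Ideal.mul_mem_left _ (∏ i ∈ S \ (Sp ∪ Sm), X (some i)) hrel) using 1
  rw [← Finset.prod_sdiff hsub, Finset.prod_union hd]
  simp only [map_mul, map_prod, rename_X]
  ring

theorem exists_rename_sub_mem_cordovilIdeal_cone {p : MvPolynomial ι ℚ}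
    (hp : p ∈ cordovilIdeal ω) :
    ∃ q, rename some p - X none * rename some q ∈ cordovilIdeal (cone ω) := by
  refine cordovilIdeal_induction (fun i ↦ ?_) (fun S hS ↦ ?_) (fun Sp Sm hd hcell hflat ↦ ?_)
    ?_ ?_ (fun a p ↦ ?_) hp
  · exact ⟨0, by simpa using X_sq_mem_cordovilIdeal (some i)⟩
  · exact exists_rename_prod_X_sub_mem_cordovilIdeal_cone ω hS
  · obtain ⟨v, hv⟩ := hflat
    have hcone : cell (cone ω) (Sp.map .some) (Sm.map .some) = ∅ := by
      refine eq_empty_of_forall_notMem fun p ⟨hp, hm⟩ ↦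
        eq_empty_iff_forall_notMem.1 hcell (v + (p.1 - p.2 • v)) ⟨fun i hi ↦ ?_, fun i hi ↦ ?_⟩
      · rw [apply_add_sub_smul_eq_cone ω (hv i (Finset.mem_union_left _ hi))]
        exact hp _ (Finset.mem_map_of_mem _ hi)
      · rw [apply_add_sub_smul_eq_cone ω (hv i (Finset.mem_union_right _ hi))]
        exact hm _ (Finset.mem_map_of_mem _ hi)
    refine ⟨0, ?_⟩
    rw [map_zero, mul_zero, sub_zero, rename_some_circuitRel]
    exact circuitRel_cone_mem_cordovilIdeal ω ((Finset.disjoint_map _).2 hd) hcone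
  · exact ⟨0, by simp⟩
  · rintro p p' ⟨q, hq⟩ ⟨q', hq'⟩
    refine ⟨q + q', ?_⟩
    convert add_mem hq hq' using 1
    rw [map_add, map_add]
    ring
  · rintro ⟨q, hq⟩
    refine ⟨a * q, ?_⟩
    convert Ideal.mul_mem_left _ (rename some a) hq using 1
    rw [map_mul, map_mul]
    ring

theorem X_none_mul_rename_mem_cordovilIdeal_cone {p : MvPolynomial ι ℚ}
    (hp : p ∈ cordovilIdeal ω) : X none * rename some p ∈ cordovilIdeal (cone ω) := by
  obtain ⟨q, hq⟩ := exists_rename_sub_mem_cordovilIdeal_cone ω hp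
  have hsq := Ideal.mul_mem_right (rename some q) _ (X_sq_mem_cordovilIdeal (ω := cone ω) none)
  convert add_mem (Ideal.mul_mem_left _ (X none) hq) hsq using 1
  ring

end Cone

/-! ### The exact sequence of the cone -/

section ExactSequence

variable {𝕜 E ι : Type*} [Field 𝕜] [LinearOrder 𝕜] [IsStrictOrderedRing 𝕜] [AddCommGroup E]
  [Module 𝕜 E] [DecidableEq ι] (ω : ι → E →ᵃ[𝕜] 𝕜)

/-- Multiplication by the generator at infinity, as a map from the algebra of an arrangement to
the algebra of its cone. It raises the degree by one. -/
noncomputable def coneMul :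
    MvPolynomial ι ℚ ⧸ cordovilIdeal ω →ₗ[ℚ]
      MvPolynomial (Option ι) ℚ ⧸ cordovilIdeal (cone ω) :=
  quotientLift (cordovilIdeal ω)
    ((Ideal.Quotient.mkₐ ℚ (cordovilIdeal (cone ω))).toLinearMap ∘ₗ
      LinearMap.mulLeft ℚ (X none) ∘ₗ (rename some).toLinearMap)
    fun _ hp ↦ Ideal.Quotient.eq_zero_iff_mem.2 (X_none_mul_rename_mem_cordovilIdeal_cone ω hp)

theorem coneMul_mk (p : MvPolynomial ι ℚ) :
    coneMul ω (Ideal.Quotient.mk _ p) = Ideal.Quotient.mk _ (X none * rename some p) :=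
  rfl

theorem mk_X_none_mul_rename_add (a : MvPolynomial ι ℚ) (p : MvPolynomial (Option ι) ℚ) :
    Ideal.Quotient.mk (cordovilIdeal (cone ω)) (X none * (rename some a + X none * p)) =
      coneMul ω (Ideal.Quotient.mk _ a) := by
  rw [coneMul_mk, Ideal.Quotient.eq]
  convert Ideal.mul_mem_right p _ (X_sq_mem_cordovilIdeal (ω := cone ω) none) using 1
  ring

theorem mk_X_none_mul_mem_range_coneMul (p : MvPolynomial (Option ι) ℚ) :
    Ideal.Quotient.mk _ (X none * p) ∈ LinearMap.range (coneMul ω) := by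
  obtain ⟨a, p, rfl⟩ := exists_eq_rename_add_X_none_mul p
  exact ⟨_, (mk_X_none_mul_rename_add ω a p).symm⟩

/-- The map from the algebra of an arrangement to the algebra of its cone modulo the generator at
infinity that sends each generator to the generator of the same name. -/
noncomputable def coneRename :
    MvPolynomial ι ℚ ⧸ cordovilIdeal ω →ₗ[ℚ]
      (MvPolynomial (Option ι) ℚ ⧸ cordovilIdeal (cone ω)) ⧸ LinearMap.range (coneMul ω) :=
  quotientLift (cordovilIdeal ω)
    ((LinearMap.range (coneMul ω)).mkQ ∘ₗ
      (Ideal.Quotient.mkₐ ℚ (cordovilIdeal (cone ω))).toLinearMap ∘ₗ (rename some).toLinearMap)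
    fun p hp ↦ by
      obtain ⟨q, hq⟩ := exists_rename_sub_mem_cordovilIdeal_cone ω hp
      exact (Submodule.Quotient.mk_eq_zero _).2
        ⟨Ideal.Quotient.mk _ q, (Ideal.Quotient.eq.2 hq).symm⟩

theorem mkQ_mk_rename_add_X_none_mul (a : MvPolynomial ι ℚ) (p : MvPolynomial (Option ι) ℚ) :
    (LinearMap.range (coneMul ω)).mkQ (Ideal.Quotient.mk _ (rename some a + X none * p)) =
      coneRename ω (Ideal.Quotient.mk _ a) := by
  refine (Submodule.Quotient.eq _).2 ?_
  rw [map_add]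
  convert mk_X_none_mul_mem_range_coneMul ω p using 1
  exact add_sub_cancel_left _ _

theorem coneRename_surjective : Function.Surjective (coneRename ω) := by
  intro y
  obtain ⟨x, rfl⟩ := Submodule.mkQ_surjective _ y
  obtain ⟨r, rfl⟩ := Ideal.Quotient.mk_surjective x
  obtain ⟨a, p, rfl⟩ := exists_eq_rename_add_X_none_mul r
  exact ⟨_, (mkQ_mk_rename_add_X_none_mul ω a p).symm⟩

theorem coneMul_injective_and_coneRename_injective [Finite ι] :
    Function.Injective (coneMul ω) ∧ Function.Injective (coneRename ω) := by
  have := finite_quotient_cordovilIdeal ω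
  have := finite_quotient_cordovilIdeal (cone ω)
  have hupper := finrank_quotient_cordovilIdeal_le_ncard_chambers ω
  have hcone := two_mul_ncard_chambers_le_ncard_chambers_cone ω
  have hlower := ncard_chambers_le_finrank_quotient_cordovilIdeal (cone_apply_zero ω)
  exact injective_of_finrank_add_le (coneRename_surjective ω) (by omega)

end ExactSequence

/-! ### Graded components -/

section Graded

variable {𝕜 E ι : Type*} [Field 𝕜] [LinearOrder 𝕜] [AddCommGroup E] [Module 𝕜 E] [DecidableEq ι]
  (ω : ι → E →ᵃ[𝕜] 𝕜)

/-- The degree-`k` component of the algebra of the arrangement given by affine functions `ω`. -/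
noncomputable def cordovilGrade (k : ℕ) : Submodule ℚ (MvPolynomial ι ℚ ⧸ cordovilIdeal ω) :=
  (homogeneousSubmodule ι ℚ k).map (Ideal.Quotient.mkₐ ℚ (cordovilIdeal ω)).toLinearMap

variable {ω} in
theorem mk_homogeneousComponent_eq_mk {r s : MvPolynomial ι ℚ} {k : ℕ} (hr : r.IsHomogeneous k)
    (h : Ideal.Quotient.mk (cordovilIdeal ω) s = Ideal.Quotient.mk _ r) :
    Ideal.Quotient.mk (cordovilIdeal ω) (homogeneousComponent k s) = Ideal.Quotient.mk _ r := by
  have hmem := homogeneousComponent_mem_of_mem (isHomogeneous_cordovilIdeal ω)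
    (Ideal.Quotient.eq.1 h) k
  rwa [map_sub, homogeneousComponent_of_mem hr, if_pos rfl, ← Ideal.Quotient.eq] at hmem

variable [IsStrictOrderedRing 𝕜]

theorem map_mkQ_cordovilGrade_cone (k : ℕ) :
    (cordovilGrade (cone ω) k).map (LinearMap.range (coneMul ω)).mkQ =
      (cordovilGrade ω k).map (coneRename ω) := by
  refine le_antisymm ?_ ?_
  · rintro _ ⟨_, ⟨r, hr, rfl⟩, rfl⟩
    obtain ⟨a, p, ha, rfl⟩ := exists_isHomogeneous_eq_rename_add_X_none_mul hr
    exact ⟨_, ⟨a, ha, rfl⟩, (mkQ_mk_rename_add_X_none_mul ω a p).symm⟩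
  · rintro _ ⟨_, ⟨a, ha, rfl⟩, rfl⟩
    exact ⟨_, ⟨rename some a, ha.rename_isHomogeneous, rfl⟩, rfl⟩

theorem cordovilGrade_cone_zero_inf_range_coneMul :
    cordovilGrade (cone ω) 0 ⊓ LinearMap.range (coneMul ω) = ⊥ := by
  rw [eq_bot_iff]
  rintro _ ⟨⟨r, hr, rfl⟩, x, hx⟩
  obtain ⟨a, rfl⟩ := Ideal.Quotient.mk_surjective x
  rw [coneMul_mk] at hx
  refine (mk_homogeneousComponent_eq_mk hr hx).symm.trans ?_
  rw [homogeneousComponent_mul_of_isHomogeneous (isHomogeneous_X ℚ none), if_neg (by decide),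
    map_zero]

theorem cordovilGrade_cone_succ_inf_range_coneMul (k : ℕ) :
    cordovilGrade (cone ω) (k + 1) ⊓ LinearMap.range (coneMul ω) =
      (cordovilGrade ω k).map (coneMul ω) := by
  refine le_antisymm ?_ ?_
  · rintro _ ⟨⟨r, hr, rfl⟩, x, hx⟩
    obtain ⟨a, rfl⟩ := Ideal.Quotient.mk_surjective x
    refine ⟨_, ⟨homogeneousComponent k a, homogeneousComponent_isHomogeneous k a, rfl⟩, ?_⟩
    rw [coneMul_mk] at hx
    refine Eq.trans ?_ (mk_homogeneousComponent_eq_mk hr hx)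
    rw [homogeneousComponent_mul_of_isHomogeneous (isHomogeneous_X ℚ none),
      if_pos (Nat.le_add_left 1 k), Nat.add_sub_cancel, ← rename_homogeneousComponent]
    rfl
  · rintro _ ⟨_, ⟨a, ha, rfl⟩, rfl⟩
    refine ⟨⟨X none * rename some a, ?_, rfl⟩, LinearMap.mem_range_self _ _⟩
    rw [add_comm]
    exact (isHomogeneous_X ℚ none).mul ha.rename_isHomogeneous

theorem bAlg_cone_poincare_general [Finite ι] (k : ℕ) :
    Module.finrank ℚ (bGrade (zeroSet (cone ω)) (posSet (cone ω)) (negSet (cone ω)) k) =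
      Module.finrank ℚ (bGrade (zeroSet ω) (posSet ω) (negSet ω) k) +
        (if k = 0 then 0 else
          Module.finrank ℚ (bGrade (zeroSet ω) (posSet ω) (negSet ω) (k - 1))) := by
  have := finite_quotient_cordovilIdeal (cone ω)
  obtain ⟨hmul, hren⟩ := coneMul_injective_and_coneRename_injective ω
  change Module.finrank ℚ (cordovilGrade (cone ω) k) = Module.finrank ℚ (cordovilGrade ω k) +
    if k = 0 then 0 else Module.finrank ℚ (cordovilGrade ω (k - 1))
  rw [← finrank_map_mkQ_add_finrank_inf _ (LinearMap.range (coneMul ω)),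
    map_mkQ_cordovilGrade_cone,
    ← (Submodule.equivMapOfInjective _ hren (cordovilGrade ω k)).finrank_eq]
  cases k with
  | zero => rw [cordovilGrade_cone_zero_inf_range_coneMul, finrank_bot, if_pos rfl]
  | succ k =>
    rw [cordovilGrade_cone_succ_inf_range_coneMul, if_neg k.succ_ne_zero, Nat.add_sub_cancel,
      ← (Submodule.equivMapOfInjective _ hmul (cordovilGrade ω k)).finrank_eq]

end Graded

/-- `Poin(B(c𝒜)) = (1 + t²)·Poin(B(𝒜))`: for every `k ≥ 0`,
`dim B(c𝒜)ₖ = dim B(𝒜)ₖ + dim B(𝒜)ₖ₋₁`. -/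
theorem bAlg_cone_poincare {n : ℕ} (ω : Fin n → V →ᵃ[ℝ] ℝ)
    (hω : ∀ i, (ω i).linear ≠ 0) :
    ∀ k : ℕ,
      Module.finrank ℚ (bGrade (cHyp ω) (cHplus ω) (cHminus ω) k) =
        Module.finrank ℚ (bGrade (Hyp ω) (Hplus ω) (Hminus ω) k) +
          (if k = 0 then 0 else
            Module.finrank ℚ (bGrade (Hyp ω) (Hplus ω) (Hminus ω) (k - 1))) := by
  have hZ : cHyp ω = zeroSet (cone ω) := funext (by rintro (_ | i) <;> rfl)
  have hp : cHplus ω = posSet (cone ω) := funext (by rintro (_ | i) <;> rfl)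
  have hm : cHminus ω = negSet (cone ω) := funext (by rintro (_ | i) <;> rfl)
  rw [hZ, hp, hm]
  exact bAlg_cone_poincare_general ω
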